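/- The rectified linear unit ReLU(x) = max(x, 0) is discriminatory for every compact set K ⊆ ℝ^N; that is, for every finite signed regular Borel measure μ on K, if ∫_K ReLU(yᵀx + θ) dμ(x) = 0 for all y ∈ ℝ^N and all θ ∈ ℝ, then μ = 0. -/

import Mathlib

/-!
For `ε → 0⁺` the difference quotients of `θ ↦ max (t + θ) 0` are bounded by `1` and converge to the
indicator of `t ≥ -θ`. By dominated convergence, the ReLU integrals of a measure on `ℝ` therefore
determine its values on all rays `[a, ∞)`, hence the measure. Applied to the images under all
continuous linear functionals, this determines a finite measure on a separable Banach space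
(Cramér–Wold), so the positive and negative parts of the signed measure agree.
-/

open Matrix MeasureTheory

/-- A function `φ : ℝ → ℝ` is discriminatory for `K ⊆ ℝ^N` if for every finite
signed regular Borel measure `μ` on `K`, `∫_K φ(yᵀx + θ) dμ(x) = 0` for all
`y ∈ ℝ^N` and `θ ∈ ℝ` implies `μ = 0`. The integral against the signed measure
is expressed via its Jordan decomposition. -/
def Discriminatory {N : ℕ} (φ : ℝ → ℝ) (K : Set (Fin N → ℝ)) : Prop :=
  ∀ μ : SignedMeasure K,
    μ.toJordanDecomposition.posPart.Regular →
    μ.toJordanDecomposition.negPart.Regular →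
    (∀ (y : Fin N → ℝ) (θ : ℝ),
      (∫ x : K, φ (y ⬝ᵥ (x : Fin N → ℝ) + θ) ∂μ.toJordanDecomposition.posPart) -
      (∫ x : K, φ (y ⬝ᵥ (x : Fin N → ℝ) + θ) ∂μ.toJordanDecomposition.negPart) = 0) →
    μ = 0

open Filter Topology

theorem tendsto_relu_diffQuotient (t : ℝ) :
    Tendsto (fun ε : ℝ => ε⁻¹ * (max (t + ε) 0 - max t 0)) (𝓝[>] 0)
      (𝓝 ((Set.Ici (0 : ℝ)).indicator 1 t)) := by
  refine tendsto_const_nhds.congr' ?_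
  rcases le_or_gt 0 t with ht | ht
  · filter_upwards [self_mem_nhdsWithin] with ε (hε : 0 < ε)
    rw [Set.indicator_of_mem (Set.mem_Ici.mpr ht), Pi.one_apply, max_eq_left ht,
      max_eq_left (by positivity), add_sub_cancel_left, inv_mul_cancel₀ hε.ne']
  · filter_upwards [nhdsWithin_le_nhds (Iio_mem_nhds (neg_pos.mpr ht))] with ε (hε : ε < -t)
    rw [Set.indicator_of_notMem (Set.notMem_Ici.mpr ht), max_eq_right ht.le,
      max_eq_right (by linarith), sub_self, mul_zero]

theorem abs_relu_diffQuotient_le_one (t ε : ℝ) :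
    |ε⁻¹ * (max (t + ε) 0 - max t 0)| ≤ 1 :=
  calc |ε⁻¹ * (max (t + ε) 0 - max t 0)|
      = |ε|⁻¹ * |max (t + ε) 0 - max t 0| := by rw [abs_mul, abs_inv]
    _ ≤ |ε|⁻¹ * |t + ε - t| :=
        mul_le_mul_of_nonneg_left (abs_max_sub_max_le_abs _ _ _) (by positivity)
    _ = |ε|⁻¹ * |ε| := by rw [add_sub_cancel_left]
    _ ≤ 1 := inv_mul_le_one

section Real

variable {p q : Measure ℝ} [IsFiniteMeasure p] [IsFiniteMeasure q]

theorem tendsto_integral_relu_diffQuotient (hp : Integrable id p) (θ : ℝ) :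
    Tendsto (fun ε : ℝ => ε⁻¹ * (∫ t, max (t + (θ + ε)) 0 ∂p - ∫ t, max (t + θ) 0 ∂p)) (𝓝[>] 0)
      (𝓝 (p.real (Set.Ici (-θ)))) := by
  have integrable_relu (η : ℝ) : Integrable (fun t => max (t + η) 0) p :=
    (hp.add (integrable_const η)).pos_part
  have integral_quotient (ε : ℝ) :
      ∫ t, ε⁻¹ * (max (t + θ + ε) 0 - max (t + θ) 0) ∂p =
        ε⁻¹ * (∫ t, max (t + (θ + ε)) 0 ∂p - ∫ t, max (t + θ) 0 ∂p) := by
    simp only [add_assoc]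
    rw [integral_const_mul, integral_sub (integrable_relu _) (integrable_relu _)]
  have integral_limit :
      ∫ t, (Set.Ici (0 : ℝ)).indicator 1 (t + θ) ∂p = p.real (Set.Ici (-θ)) := by
    rw [← integral_indicator_one measurableSet_Ici]
    congr with t
    simp only [Set.indicator_apply, Set.mem_Ici, neg_le_iff_add_nonneg, Pi.one_apply]
  rw [← integral_limit]
  simp only [← integral_quotient]
  refine tendsto_integral_filter_of_dominated_convergence (fun _ => 1) ?_ ?_
    (integrable_const 1) ?_
  · exact .of_forall fun ε => Continuous.aestronglyMeasurable (by fun_prop)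
  · exact .of_forall fun ε => .of_forall fun t => abs_relu_diffQuotient_le_one (t + θ) ε
  · exact .of_forall fun t => tendsto_relu_diffQuotient (t + θ)

theorem measure_real_ext_of_integral_relu (hp : Integrable id p) (hq : Integrable id q)
    (h : ∀ θ : ℝ, ∫ t, max (t + θ) 0 ∂p = ∫ t, max (t + θ) 0 ∂q) : p = q := by
  refine Measure.ext_of_Ici p q fun a => ?_
  have hlim := tendsto_integral_relu_diffQuotient hp (-a)
  simp only [h] at hlim
  have hreal := tendsto_nhds_unique hlim (tendsto_integral_relu_diffQuotient hq (-a))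
  rwa [neg_neg, measureReal_eq_measureReal_iff] at hreal

end Real

theorem measure_map_injective_of_eq_comap {α β : Type*} {mα : MeasurableSpace α}
    {mβ : MeasurableSpace β} {f : α → β} (hf : mα = mβ.comap f) :
    Function.Injective (Measure.map f) := by
  intro p q hpq
  have hmeas : Measurable f := measurable_iff_comap_le.mpr hf.ge
  refine Measure.ext fun t ht => ?_
  obtain ⟨s, hs, rfl⟩ : MeasurableSet[mβ.comap f] t := hf ▸ ht
  rw [← Measure.map_apply hmeas hs, hpq, Measure.map_apply hmeas hs]

theorem signedMeasure_eq_zero_of_posPart_eq_negPart {α : Type*} [MeasurableSpace α]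
    {μ : SignedMeasure α}
    (h : μ.toJordanDecomposition.posPart = μ.toJordanDecomposition.negPart) : μ = 0 := by
  rw [← μ.toSignedMeasure_toJordanDecomposition, JordanDecomposition.toSignedMeasure]
  simp only [h, sub_self]

section Banach

variable {E : Type*} [NormedAddCommGroup E] [NormedSpace ℝ E] [CompleteSpace E]
  [SecondCountableTopology E] [MeasurableSpace E] [BorelSpace E]

theorem measure_ext_of_map_strongDual {p q : Measure E} [IsFiniteMeasure p] [IsFiniteMeasure q]
    (h : ∀ L : StrongDual ℝ E, p.map L = q.map L) : p = q :=
  Measure.ext_of_charFunDual <| funext fun L => by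
    rw [charFunDual_eq_charFun_map_one, charFunDual_eq_charFun_map_one, h L]

theorem measure_ext_of_integral_relu {p q : Measure E} [IsFiniteMeasure p] [IsFiniteMeasure q]
    (hp : ∀ L : StrongDual ℝ E, Integrable L p) (hq : ∀ L : StrongDual ℝ E, Integrable L q)
    (h : ∀ (L : StrongDual ℝ E) (θ : ℝ),
      ∫ x, max (L x + θ) 0 ∂p = ∫ x, max (L x + θ) 0 ∂q) : p = q := by
  refine measure_ext_of_map_strongDual fun L => ?_
  have hL {m : Measure E} : AEMeasurable L m := L.continuous.aemeasurable
  have hcont (θ : ℝ) : Continuous fun t : ℝ => max (t + θ) 0 := by fun_prop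
  refine measure_real_ext_of_integral_relu
    ((integrable_map_measure aestronglyMeasurable_id hL).mpr (hp L))
    ((integrable_map_measure aestronglyMeasurable_id hL).mpr (hq L)) fun θ => ?_
  rw [integral_map hL (hcont θ).aestronglyMeasurable,
    integral_map hL (hcont θ).aestronglyMeasurable, h L θ]

theorem relu_is_discriminatory_general {K : Set E} {μ : SignedMeasure K}
    (hμ : ∀ L : StrongDual ℝ E, Integrable (fun x : K => L x) μ.totalVariation)
    (h : ∀ (L : StrongDual ℝ E) (θ : ℝ),
      (∫ x : K, max (L x + θ) 0 ∂μ.toJordanDecomposition.posPart) -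
      (∫ x : K, max (L x + θ) 0 ∂μ.toJordanDecomposition.negPart) = 0) :
    μ = 0 := by
  have hval {m : Measure K} : AEMeasurable Subtype.val m := measurable_subtype_coe.aemeasurable
  have integrable_map {m : Measure K} (hm : m ≤ μ.totalVariation) (L : StrongDual ℝ E) :
      Integrable L (m.map Subtype.val) :=
    (integrable_map_measure L.continuous.aestronglyMeasurable hval).mpr ((hμ L).mono_measure hm)
  refine signedMeasure_eq_zero_of_posPart_eq_negPart <| measure_map_injective_of_eq_comap rfl <|
    measure_ext_of_integral_relu (integrable_map (Measure.le_add_right le_rfl))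
      (integrable_map (Measure.le_add_left le_rfl)) fun L θ => ?_
  have hcont : Continuous fun x : E => max (L x + θ) 0 := by fun_prop
  rw [integral_map hval hcont.aestronglyMeasurable, integral_map hval hcont.aestronglyMeasurable]
  exact sub_eq_zero.mp (h L θ)

end Banach

theorem exists_dotProduct_eq_strongDual {ι : Type*} [Fintype ι] (L : StrongDual ℝ (ι → ℝ)) :
    ∃ y : ι → ℝ, ∀ x, y ⬝ᵥ x = L x := by
  classical
  obtain ⟨y, hy⟩ := (dotProductEquiv ℝ ι).surjective L.toLinearMap
  exact ⟨y, LinearMap.congr_fun hy⟩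

/-- The rectified linear unit `ReLU(x) = max(x, 0)` is
discriminatory for every compact set `K ⊆ ℝ^N`. -/
theorem relu_is_discriminatory {N : ℕ} (K : Set (Fin N → ℝ))
    (hK : IsCompact K) :
    Discriminatory (fun x : ℝ => max x 0) K := by
  intro μ _ _ h
  have : CompactSpace K := isCompact_iff_compactSpace.mp hK
  refine relu_is_discriminatory_general (fun L => ?_) fun L θ => ?_
  · exact (L.continuous.comp continuous_subtype_val).integrable_of_hasCompactSupport
      (.of_compactSpace _)
  · obtain ⟨y, hy⟩ := exists_dotProduct_eq_strongDual L
    simpa only [hy] using h y θ
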